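/- Fix N⋆ ∈ ℕ, let Λ = {k ∈ ℤ³ : k ≠ 0, |k_j| ≤ N⋆ for all j}, and let V be the real vector space of families u = (u_k)_{k∈Λ}, u_k ∈ ℂ³, satisfying u_{−k} = conj(u_k) and k · u_k = 0 for all k ∈ Λ. Define B by B_k(u) = −i ∑_{h,ℓ∈Λ, h+ℓ=k} (k·u_h)(u_ℓ − ((k·u_ℓ)/|k|²)k). Then B maps V into V (i.e. B(u) again satisfies the reality and incompressibility constraints for every u ∈ V), and B, viewed as a vector field on the finite-dimensional real vector space V, is divergence-free: for every u ∈ V, the trace of the derivative DB(u) : V → V is zero. -/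

import Mathlib

/-!
The linearisation `DB(u)` is linear in `u`, and since `B` commutes with translations in physical
space, differentiating along a translation gives `DB(∂ⱼ w) = [∂ⱼ, DB(w)]`, whose trace vanishes.
A field without a zero mode is a sum of derivatives, `u = ∑ⱼ ∂ⱼ (∂ⱼ Δ⁻¹ u)`, so `tr DB(u) = 0` for
every `u`.
-/

open scoped BigOperators

/-- The finite set `Λ = {k ∈ ℤ³ : k ≠ 0, |k_j| ≤ N⋆ for all j}` of retained Fourier modes. -/
noncomputable def eulerModes (Nstar : ℕ) : Finset (Fin 3 → ℤ) :=
  (Fintype.piFinset fun _ : Fin 3 => Finset.Icc (-(Nstar : ℤ)) (Nstar : ℤ)).filter (· ≠ 0)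

/-- The pairing `k · v = ∑_j k_j v_j` of an integer wave vector with a complex vector. -/
noncomputable def eulerDot (k : Fin 3 → ℤ) (v : Fin 3 → ℂ) : ℂ := ∑ j, (k j : ℂ) * v j

/-- The ambient space of families `(u_k)_{k ∈ Λ}` with `u_k ∈ ℂ³`. -/
abbrev EulerW (Nstar : ℕ) := {k : Fin 3 → ℤ // k ∈ eulerModes Nstar} → Fin 3 → ℂ

/-- The Galerkin–Euler vector field
`B_k(u) = -i ∑_{h+ℓ=k, h,ℓ∈Λ} (k·u_h)(u_ℓ - ((k·u_ℓ)/|k|²) k)` on `EulerW Nstar`. -/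
noncomputable def eulerB (Nstar : ℕ) (u : EulerW Nstar) : EulerW Nstar := fun k j =>
  -Complex.I * ∑ h : {k : Fin 3 → ℤ // k ∈ eulerModes Nstar},
    ∑ l : {k : Fin 3 → ℤ // k ∈ eulerModes Nstar},
      if (h : Fin 3 → ℤ) + (l : Fin 3 → ℤ) = (k : Fin 3 → ℤ) then
        eulerDot k (u h) *
          (u l j - eulerDot k (u l) / (∑ j', ((k : Fin 3 → ℤ) j' : ℂ) ^ 2) *
            ((k : Fin 3 → ℤ) j : ℂ))
      else 0

/-- The real vector space `V` of families satisfying the reality condition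
`u_{-k} = conj (u_k)` and the incompressibility condition `k · u_k = 0`. -/
noncomputable def eulerV (Nstar : ℕ) : Submodule ℝ (EulerW Nstar) where
  carrier := {u |
    (∀ (k : {k : Fin 3 → ℤ // k ∈ eulerModes Nstar})
        (hk : -(k : Fin 3 → ℤ) ∈ eulerModes Nstar),
      u ⟨-(k : Fin 3 → ℤ), hk⟩ = fun j => starRingEnd ℂ (u k j)) ∧
    ∀ k : {k : Fin 3 → ℤ // k ∈ eulerModes Nstar}, eulerDot k (u k) = 0}
  zero_mem' := by
    constructor
    · intro k hk; funext j; simp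
    · intro k; simp [eulerDot]
  add_mem' := by
    rintro u v ⟨hu₁, hu₂⟩ ⟨hv₁, hv₂⟩
    constructor
    · intro k hk; funext j
      simp [hu₁ k hk, hv₁ k hk]
    · intro k
      have : eulerDot k ((u + v) k) = eulerDot k (u k) + eulerDot k (v k) := by
        simp [eulerDot, mul_add, Finset.sum_add_distrib]
      rw [this, hu₂ k, hv₂ k, add_zero]
  smul_mem' := by
    rintro c u ⟨hu₁, hu₂⟩
    constructor
    · intro k hk; funext j
      simp [hu₁ k hk, Complex.real_smul]
    · intro k
      have : eulerDot k ((c • u) k) = (c : ℂ) * eulerDot k (u k) := by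
        simp only [eulerDot, Pi.smul_apply, Complex.real_smul, Finset.mul_sum]
        exact Finset.sum_congr rfl fun j _ => by ring
      rw [this, hu₂ k, mul_zero]

section LinearAlgebra

theorem trace_apply_eq_zero_of_leibniz {R M : Type*} [CommRing R] [AddCommGroup M] [Module R M]
    (b : M →ₗ[R] M →ₗ[R] M) (D : Module.End R M)
    (hD : ∀ x y, D (b x y) = b (D x) y + b x (D y)) (x : M) :
    LinearMap.trace R M (b (D x)) = 0 := by
  have hcomm : b (D x) = ⁅D, b x⁆ := by
    ext y
    simp [Ring.lie_def, hD]
  rw [hcomm, LinearMap.trace_lie]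

theorem hasFDerivAt_bilin_diag {𝕜 E F : Type*} [NontriviallyNormedField 𝕜] [CompleteSpace 𝕜]
    [NormedAddCommGroup E] [NormedSpace 𝕜 E] [FiniteDimensional 𝕜 E]
    [NormedAddCommGroup F] [NormedSpace 𝕜 F] (b : E →ₗ[𝕜] E →ₗ[𝕜] F) (x : E) :
    HasFDerivAt (fun y => b y y) ((b x + b.flip x).toContinuousLinearMap) x := by
  have h := b.toContinuousBilinearMap.hasFDerivAt_of_bilinear (hasFDerivAt_id x) (hasFDerivAt_id x)
  refine h.congr_fderiv ?_
  ext y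
  simp

end LinearAlgebra

section WaveVector

variable {ι : Type*}

/-- The integer wave vector `k` as a complex vector, so that `k · v` is `waveVector k ⬝ᵥ v`. -/
def waveVector (k : ι → ℤ) : ι → ℂ := fun j => k j

@[simp]
theorem waveVector_neg (k : ι → ℤ) : waveVector (-k) = -waveVector k := by
  ext j
  simp [waveVector]

@[simp]
theorem star_waveVector (k : ι → ℤ) : star (waveVector k) = waveVector k := by
  ext j
  simp [waveVector]

variable [Fintype ι]

theorem waveVector_dotProduct_star (k : ι → ℤ) (v : ι → ℂ) :
    waveVector k ⬝ᵥ star v = star (waveVector k ⬝ᵥ v) := by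
  rw [Matrix.dotProduct_star, dotProduct_comm, star_waveVector, dotProduct_comm]

theorem waveVector_dotProduct_self (k : ι → ℤ) :
    waveVector k ⬝ᵥ waveVector k = ∑ j, (k j : ℂ) ^ 2 := by
  simp [dotProduct, waveVector, sq]

theorem waveVector_dotProduct_self_eq_zero {k : ι → ℤ} :
    waveVector k ⬝ᵥ waveVector k = 0 ↔ k = 0 := by
  rw [← dotProduct_self_eq_zero (v := k), ← Int.cast_eq_zero (α := ℂ)]
  simp [dotProduct, waveVector]

/-- The Leray projection `v ↦ v - ((k · v) / |k|²) k` of `ℂ^ι` onto the orthogonal complement of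
the wave vector `k`; it is the identity for `k = 0`. -/
noncomputable def lerayProjection (k : ι → ℤ) : (ι → ℂ) →ₗ[ℂ] ι → ℂ where
  toFun v := v - (waveVector k ⬝ᵥ v / waveVector k ⬝ᵥ waveVector k) • waveVector k
  map_add' v w := by
    rw [dotProduct_add, add_div, add_smul]
    abel
  map_smul' c v := by
    rw [dotProduct_smul, smul_eq_mul, mul_div_assoc, mul_smul, RingHom.id_apply, smul_sub]

theorem lerayProjection_apply (k : ι → ℤ) (v : ι → ℂ) :
    lerayProjection k v =
      v - (waveVector k ⬝ᵥ v / waveVector k ⬝ᵥ waveVector k) • waveVector k := rfl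

theorem waveVector_dotProduct_lerayProjection (k : ι → ℤ) (v : ι → ℂ) :
    waveVector k ⬝ᵥ lerayProjection k v = 0 := by
  rcases eq_or_ne k 0 with rfl | hk
  · simp [dotProduct, waveVector]
  · rw [lerayProjection_apply, dotProduct_sub, dotProduct_smul, smul_eq_mul,
      div_mul_cancel₀ _ (waveVector_dotProduct_self_eq_zero.not.mpr hk), sub_self]

theorem lerayProjection_neg_star (k : ι → ℤ) (v : ι → ℂ) :
    lerayProjection (-k) (star v) = star (lerayProjection k v) := by
  have hself : star (waveVector k ⬝ᵥ waveVector k) = waveVector k ⬝ᵥ waveVector k := by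
    rw [← waveVector_dotProduct_star, star_waveVector]
  simp [lerayProjection_apply, waveVector_dotProduct_star, hself, neg_div]

end WaveVector

section Galerkin

variable {ι : Type*}

/-- The operator multiplying the `k`-th Fourier coefficient by `m k`. -/
noncomputable def fourierMultiplier (Λ : Finset (ι → ℤ)) (m : (ι → ℤ) → ℂ) :
    Module.End ℝ (Λ → ι → ℂ) :=
  LinearMap.pi fun k => m k • LinearMap.proj k

theorem fourierMultiplier_apply (Λ : Finset (ι → ℤ)) (m : (ι → ℤ) → ℂ) (u : Λ → ι → ℂ) (k : Λ) :
    fourierMultiplier Λ m u k = m k • u k := rfl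

variable [Fintype ι]

/-- The real vector space of Fourier coefficients, on the modes `Λ`, of real divergence-free vector
fields on the torus: `u_{-k} = conj u_k` and `k · u_k = 0`. -/
noncomputable def solenoidalFields (Λ : Finset (ι → ℤ)) : Submodule ℝ (Λ → ι → ℂ) where
  carrier := {u |
    (∀ (k : Λ) (hk : -(k : ι → ℤ) ∈ Λ), u ⟨-(k : ι → ℤ), hk⟩ = star (u k)) ∧
    ∀ k : Λ, waveVector (k : ι → ℤ) ⬝ᵥ u k = 0}
  zero_mem' := by simp
  add_mem' := by
    rintro u v ⟨hu_real, hu_div⟩ ⟨hv_real, hv_div⟩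
    exact ⟨fun k hk => by simp [hu_real k hk, hv_real k hk],
      fun k => by simp [dotProduct_add, hu_div k, hv_div k]⟩
  smul_mem' := by
    rintro c u ⟨hu_real, hu_div⟩
    exact ⟨fun k hk => by simp [hu_real k hk], fun k => by simp [hu_div k]⟩

theorem fourierMultiplier_mem_solenoidalFields {Λ : Finset (ι → ℤ)} {m : (ι → ℤ) → ℂ}
    (hm : ∀ k, m (-k) = star (m k)) {u : Λ → ι → ℂ} (hu : u ∈ solenoidalFields Λ) :
    fourierMultiplier Λ m u ∈ solenoidalFields Λ := by
  obtain ⟨hu_real, hu_div⟩ := hu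
  exact ⟨fun k hk => by simp [fourierMultiplier_apply, hu_real k hk, hm],
    fun k => by simp [fourierMultiplier_apply, hu_div k]⟩

/-- The partial derivative `∂ⱼ`, with Fourier symbol `i kⱼ`, on solenoidal fields. -/
noncomputable def solenoidalPartialDeriv (Λ : Finset (ι → ℤ)) (j : ι) :
    Module.End ℝ (solenoidalFields Λ) :=
  (fourierMultiplier Λ fun k => Complex.I * k j).restrict fun _ =>
    fourierMultiplier_mem_solenoidalFields fun k => by simp

theorem exists_eq_sum_solenoidalPartialDeriv {Λ : Finset (ι → ℤ)} (hzero : 0 ∉ Λ)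
    (u : solenoidalFields Λ) :
    ∃ w : ι → solenoidalFields Λ, u = ∑ j, solenoidalPartialDeriv Λ j (w j) := by
  -- `w j = ∂ⱼ Δ⁻¹ u`
  let m (j : ι) (k : ι → ℤ) : ℂ := -(Complex.I * k j) / ∑ i, (k i : ℂ) ^ 2
  have hm (j : ι) (k : ι → ℤ) : m j (-k) = star (m j k) := by simp [m]
  refine ⟨fun j => ⟨fourierMultiplier Λ (m j) u,
    fourierMultiplier_mem_solenoidalFields (hm j) u.2⟩, ?_⟩
  ext k : 2
  have hk : ∑ i, (k.1 i : ℂ) ^ 2 ≠ 0 := by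
    rw [← waveVector_dotProduct_self]
    exact waveVector_dotProduct_self_eq_zero.not.mpr (ne_of_mem_of_not_mem k.2 hzero)
  have hsymbol (j : ι) : Complex.I * k.1 j * m j k = (k.1 j : ℂ) ^ 2 / ∑ i, (k.1 i : ℂ) ^ 2 := by
    linear_combination (-(k.1 j : ℂ) ^ 2 / ∑ i, (k.1 i : ℂ) ^ 2) * Complex.I_sq
  simp only [AddSubmonoidClass.coe_finsetSum, Finset.sum_apply, solenoidalPartialDeriv,
    LinearMap.coe_restrict_apply, fourierMultiplier_apply, smul_smul, hsymbol]
  rw [← Finset.sum_smul, ← Finset.sum_div, div_self hk, one_smul]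

/-- The bilinear map
`(u, v) ↦ (-i ∑_{h+ℓ=k, h,ℓ∈Λ} (k · u_h) P_k v_ℓ)_k`, with `P_k` the Leray projection. -/
noncomputable def galerkinBilin (Λ : Finset (ι → ℤ)) :
    (Λ → ι → ℂ) →ₗ[ℂ] (Λ → ι → ℂ) →ₗ[ℂ] Λ → ι → ℂ :=
  LinearMap.mk₂ ℂ
    (fun u v k => -Complex.I • ∑ h : Λ, ∑ l : Λ,
      if (h : ι → ℤ) + l = k then (waveVector k ⬝ᵥ u h) • lerayProjection k (v l) else 0)
    (fun u u' v => by
      ext1 k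
      simp [dotProduct_add, add_smul, ite_add_zero, Finset.sum_add_distrib])
    (fun c u v => by
      ext1 k
      simp [mul_smul, smul_comm _ c, Finset.smul_sum])
    (fun u v v' => by
      ext1 k
      simp [ite_add_zero, Finset.sum_add_distrib])
    (fun c u v => by
      ext1 k
      simp [smul_comm _ c, Finset.smul_sum])

theorem galerkinBilin_apply (Λ : Finset (ι → ℤ)) (u v : Λ → ι → ℂ) (k : Λ) :
    galerkinBilin Λ u v k = -Complex.I • ∑ h : Λ, ∑ l : Λ,
      if (h : ι → ℤ) + l = k then (waveVector k ⬝ᵥ u h) • lerayProjection k (v l) else 0 := rfl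

/-- The Galerkin approximation `B(u)` of the Euler vector field on the modes `Λ`. -/
noncomputable def galerkinField (Λ : Finset (ι → ℤ)) (u : Λ → ι → ℂ) : Λ → ι → ℂ :=
  galerkinBilin Λ u u

theorem fderiv_galerkinField_apply (Λ : Finset (ι → ℤ)) (u v : Λ → ι → ℂ) :
    fderiv ℝ (galerkinField Λ) u v = galerkinBilin Λ u v + galerkinBilin Λ v u := by
  have h : HasFDerivAt (𝕜 := ℝ) (galerkinField Λ) _ u :=
    (hasFDerivAt_bilin_diag (galerkinBilin Λ) u).restrictScalars ℝ
  rw [h.fderiv]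
  simp

theorem waveVector_dotProduct_galerkinBilin (Λ : Finset (ι → ℤ)) (u v : Λ → ι → ℂ) (k : Λ) :
    waveVector (k : ι → ℤ) ⬝ᵥ galerkinBilin Λ u v k = 0 := by
  simp only [galerkinBilin_apply, dotProduct_smul, dotProduct_sum]
  refine smul_eq_zero_of_right _ (Finset.sum_eq_zero fun h _ => Finset.sum_eq_zero fun l _ => ?_)
  split_ifs
  · rw [dotProduct_smul, waveVector_dotProduct_lerayProjection, smul_zero]
  · exact dotProduct_zero _

theorem galerkinBilin_apply_neg {Λ : Finset (ι → ℤ)} (hneg : ∀ k ∈ Λ, -k ∈ Λ) {u v : Λ → ι → ℂ}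
    (hu : u ∈ solenoidalFields Λ) (hv : v ∈ solenoidalFields Λ) (k : Λ) :
    galerkinBilin Λ u v ⟨-k, hneg k k.2⟩ = star (galerkinBilin Λ u v k) := by
  let e : Λ ≃ Λ := (Equiv.neg _).subtypeEquiv fun k => ⟨hneg k, fun h => by simpa using hneg _ h⟩
  have coe_e (h : Λ) : (e h : ι → ℤ) = -h := rfl
  have hu_e (h : Λ) : u (e h) = star (u h) := hu.1 h (hneg h h.2)
  have hv_e (h : Λ) : v (e h) = star (v h) := hv.1 h (hneg h h.2)
  have hsum (h l : Λ) : -(h : ι → ℤ) + -l = -k ↔ (h : ι → ℤ) + l = k := by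
    rw [← neg_add, neg_inj]
  simp only [galerkinBilin_apply, star_smul, star_sum]
  rw [← e.sum_comp, star_neg, Complex.star_def, Complex.conj_I, neg_smul, ← smul_neg,
    ← Finset.sum_neg_distrib, neg_neg]
  refine congrArg _ (Finset.sum_congr rfl fun h _ => ?_)
  rw [← e.sum_comp, ← Finset.sum_neg_distrib]
  refine Finset.sum_congr rfl fun l _ => ?_
  simp only [coe_e, hu_e, hv_e, hsum]
  split_ifs
  · simp [waveVector_dotProduct_star, lerayProjection_neg_star]
  · simp

theorem galerkinBilin_mem_solenoidalFields {Λ : Finset (ι → ℤ)} (hneg : ∀ k ∈ Λ, -k ∈ Λ)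
    {u v : Λ → ι → ℂ} (hu : u ∈ solenoidalFields Λ) (hv : v ∈ solenoidalFields Λ) :
    galerkinBilin Λ u v ∈ solenoidalFields Λ :=
  ⟨fun k _ => galerkinBilin_apply_neg hneg hu hv k, waveVector_dotProduct_galerkinBilin Λ u v⟩

theorem fourierMultiplier_galerkinBilin (Λ : Finset (ι → ℤ)) {m : (ι → ℤ) → ℂ}
    (hm : ∀ h l, m (h + l) = m h + m l) (u v : Λ → ι → ℂ) :
    fourierMultiplier Λ m (galerkinBilin Λ u v) =
      galerkinBilin Λ (fourierMultiplier Λ m u) v +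
        galerkinBilin Λ u (fourierMultiplier Λ m v) := by
  ext1 k
  simp only [fourierMultiplier_apply, galerkinBilin_apply, Pi.add_apply]
  rw [smul_comm, ← smul_add, Finset.smul_sum, ← Finset.sum_add_distrib]
  refine congrArg _ (Finset.sum_congr rfl fun h _ => ?_)
  rw [Finset.smul_sum, ← Finset.sum_add_distrib]
  refine Finset.sum_congr rfl fun l _ => ?_
  split_ifs with hk
  · rw [← hk, hm, dotProduct_smul, map_smul, smul_assoc, smul_comm _ (m l), add_smul]
  · simp

/-- The restriction of `galerkinBilin` to solenoidal fields, as a real bilinear map. -/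
noncomputable def solenoidalBilin {Λ : Finset (ι → ℤ)} (hneg : ∀ k ∈ Λ, -k ∈ Λ) :
    solenoidalFields Λ →ₗ[ℝ] solenoidalFields Λ →ₗ[ℝ] solenoidalFields Λ :=
  LinearMap.restrictScalarsRange₂ (solenoidalFields Λ).subtype (solenoidalFields Λ).subtype
    (solenoidalFields Λ).subtype (solenoidalFields Λ).subtype_injective (galerkinBilin Λ)
    fun u v => ⟨⟨_, galerkinBilin_mem_solenoidalFields hneg u.2 v.2⟩, rfl⟩

theorem coe_solenoidalBilin {Λ : Finset (ι → ℤ)} (hneg : ∀ k ∈ Λ, -k ∈ Λ)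
    (u v : solenoidalFields Λ) :
    (solenoidalBilin hneg u v : Λ → ι → ℂ) = galerkinBilin Λ u v :=
  LinearMap.restrictScalarsRange₂_apply _ _ (solenoidalFields Λ).subtype _ (galerkinBilin Λ) _ u v

theorem solenoidalPartialDeriv_solenoidalBilin {Λ : Finset (ι → ℤ)} (hneg : ∀ k ∈ Λ, -k ∈ Λ)
    (j : ι) (u v : solenoidalFields Λ) :
    solenoidalPartialDeriv Λ j (solenoidalBilin hneg u v) =
      solenoidalBilin hneg (solenoidalPartialDeriv Λ j u) v +
        solenoidalBilin hneg u (solenoidalPartialDeriv Λ j v) := by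
  ext1
  simp only [solenoidalPartialDeriv, LinearMap.coe_restrict_apply, Submodule.coe_add,
    coe_solenoidalBilin]
  exact fourierMultiplier_galerkinBilin Λ (fun h l => by simp [mul_add]) _ _

theorem trace_solenoidalBilin_add_flip {Λ : Finset (ι → ℤ)} (hneg : ∀ k ∈ Λ, -k ∈ Λ)
    (hzero : 0 ∉ Λ) (u : solenoidalFields Λ) :
    LinearMap.trace ℝ (solenoidalFields Λ)
      (solenoidalBilin hneg u + (solenoidalBilin hneg).flip u) = 0 := by
  obtain ⟨w, hw⟩ := exists_eq_sum_solenoidalPartialDeriv hzero u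
  have htrace (j : ι) : LinearMap.trace ℝ (solenoidalFields Λ)
      ((solenoidalBilin hneg + (solenoidalBilin hneg).flip)
        (solenoidalPartialDeriv Λ j (w j))) = 0 := by
    refine trace_apply_eq_zero_of_leibniz _ _ (fun x y => ?_) _
    simp only [LinearMap.add_apply, LinearMap.flip_apply, map_add,
      solenoidalPartialDeriv_solenoidalBilin]
    abel
  rw [← LinearMap.add_apply, hw, map_sum, map_sum]
  exact Finset.sum_eq_zero fun j _ => htrace j

theorem galerkin_euler_divergence_free_general {Λ : Finset (ι → ℤ)} (hneg : ∀ k ∈ Λ, -k ∈ Λ)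
    (hzero : 0 ∉ Λ) :
    (∀ u ∈ solenoidalFields Λ, galerkinField Λ u ∈ solenoidalFields Λ) ∧
      ∀ u ∈ solenoidalFields Λ,
        ∃ hmap : ∀ v ∈ solenoidalFields Λ, fderiv ℝ (galerkinField Λ) u v ∈ solenoidalFields Λ,
          LinearMap.trace ℝ (solenoidalFields Λ)
            ((fderiv ℝ (galerkinField Λ) u).toLinearMap.restrict hmap) = 0 := by
  refine ⟨fun u hu => galerkinBilin_mem_solenoidalFields hneg hu hu, fun u hu => ⟨?_, ?_⟩⟩
  · intro v hv
    rw [fderiv_galerkinField_apply]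
    exact add_mem (galerkinBilin_mem_solenoidalFields hneg hu hv)
      (galerkinBilin_mem_solenoidalFields hneg hv hu)
  · rw [← trace_solenoidalBilin_add_flip hneg hzero ⟨u, hu⟩]
    congr 1
    ext1 v
    apply Subtype.ext
    simp [coe_solenoidalBilin, fderiv_galerkinField_apply]

end Galerkin

theorem neg_mem_eulerModes {Nstar : ℕ} {k : Fin 3 → ℤ} (hk : k ∈ eulerModes Nstar) :
    -k ∈ eulerModes Nstar := by
  simp only [eulerModes, Finset.mem_filter, Fintype.mem_piFinset, Finset.mem_Icc, ne_eq,
    Pi.neg_apply, neg_eq_zero] at hk ⊢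
  exact ⟨fun j => ⟨neg_le_neg (hk.1 j).2, neg_le.mp (hk.1 j).1⟩, hk.2⟩

theorem zero_notMem_eulerModes (Nstar : ℕ) : 0 ∉ eulerModes Nstar := by
  simp [eulerModes]

theorem eulerB_eq_galerkinField (Nstar : ℕ) :
    eulerB Nstar = galerkinField (eulerModes Nstar) := by
  ext u k j
  simp only [eulerB, galerkinField, galerkinBilin_apply, lerayProjection_apply,
    waveVector_dotProduct_self, Pi.smul_apply, Finset.sum_apply, smul_eq_mul]
  refine congrArg _ (Finset.sum_congr rfl fun h _ => Finset.sum_congr rfl fun l _ => ?_)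
  split_ifs <;> rfl

theorem eulerV_eq_solenoidalFields (Nstar : ℕ) :
    eulerV Nstar = solenoidalFields (eulerModes Nstar) := rfl

/-- **The Galerkin–Euler vector field preserves the constraint space and is
divergence-free.** `B` maps `V` into `V`, and for every `u ∈ V` the derivative
`DB(u) : V → V` has zero trace. -/
theorem galerkin_euler_divergence_free (Nstar : ℕ) :
    (∀ u ∈ eulerV Nstar, eulerB Nstar u ∈ eulerV Nstar) ∧
      ∀ u ∈ eulerV Nstar,
        ∃ hmap : ∀ v ∈ eulerV Nstar, fderiv ℝ (eulerB Nstar) u v ∈ eulerV Nstar,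
          LinearMap.trace ℝ (eulerV Nstar)
            ((fderiv ℝ (eulerB Nstar) u).toLinearMap.restrict hmap) = 0 := by
  rw [eulerB_eq_galerkinField, eulerV_eq_solenoidalFields]
  exact galerkin_euler_divergence_free_general (fun _ => neg_mem_eulerModes)
    (zero_notMem_eulerModes Nstar)
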